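/- arXiv:2309.16616 — 2 statements merged into one kernel-verified Lean document; each statement's English description precedes it below -/
import Mathlib

section
/- Let A be an atomic domain that is quasilocal (has a unique maximal ideal) and has Krull dimension 1. Then either every atom of A is good, or every atom of A is bad. -/
/-!
The idea: a good atom `x` can only occur in balanced irredundant equalities, and any atomic
equality breaks up into irredundant ones. Hence from every atomic equality one can split off a
balanced part containing all occurrences of `x` on one side (`exists_balanced_split`).

Suppose that `x` is good but some equality `∏ S = ∏ T` has `|S| < |T|`. In a one-dimensional
quasilocal domain, any nonzero element divides a power of any nonunit. Therefore the powers of `x`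
dividing `(∏ S) ^ N` are bounded, say with largest exponent `k`, and we may factor `(∏ S) ^ N`
into atoms with at least `k` of them equal to `x`. Comparing with the factorization `N • S`, and
exchanging the part outside the balanced one for the corresponding atoms of `N • S`, gives such a
factorization `F` with exactly `N |S|` atoms. Comparing `F` with `N • T`, the part `T₂` of `N • T`
outside the balanced part has `x ∤ ∏ T₂` by maximality of `k`. Since `x` divides some power of every
atom in `T`, the size of `T₂` is bounded by a constant `C` independent of `N`, so that
`N |T| ≤ N |S| + C` for all `N`, which is absurd. So a single good atom forces all factorizations of
an element to have the same length, and then no atom is bad.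
-/


/-- An *atomic equality* `a₁⋯aₙ = b₁⋯bₘ` (n, m ≥ 1), encoded by two nonempty
multisets of irreducible elements with equal products. -/
def IsAtomicEquality {A : Type*} [CommRing A] (s t : Multiset A) : Prop :=
  s ≠ 0 ∧ t ≠ 0 ∧ (∀ a ∈ s, Irreducible a) ∧ (∀ b ∈ t, Irreducible b) ∧ s.prod = t.prod

/-- The atomic equality given by `s` and `t` is *irredundant* if no product of a
nonempty proper sub-multiset of `s` is associated to a product of a nonempty proper
sub-multiset of `t`. -/
def IsIrredundant {A : Type*} [CommRing A] (s t : Multiset A) : Prop :=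
  ∀ u v : Multiset A, u ≤ s → v ≤ t → u ≠ 0 → v ≠ 0 → u ≠ s → v ≠ t →
    ¬ Associated u.prod v.prod

/-- A *bad atom* is an irreducible element appearing in some irredundant unbalanced
atomic equality. -/
def IsBadAtom {A : Type*} [CommRing A] (x : A) : Prop :=
  Irreducible x ∧ ∃ s t : Multiset A, IsAtomicEquality s t ∧ IsIrredundant s t ∧
    Multiset.card s ≠ Multiset.card t ∧ (x ∈ s ∨ x ∈ t)

/-- A *good atom* is an irreducible element that is not a bad atom. -/
def IsGoodAtom {A : Type*} [CommRing A] (x : A) : Prop :=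
  Irreducible x ∧ ¬ IsBadAtom x

/-- A ring is *atomic* if every nonzero nonunit is a finite product of irreducible
elements. -/
def IsAtomicDomain (A : Type*) [CommRing A] : Prop :=
  ∀ x : A, x ≠ 0 → ¬ IsUnit x → ∃ s : Multiset A, (∀ a ∈ s, Irreducible a) ∧ s.prod = x

/-- An *HF-element*: all its factorizations into irreducible elements have the same
number of factors. -/
def IsHFElement {A : Type*} [CommRing A] (x : A) : Prop :=
  ∀ s t : Multiset A, (∀ a ∈ s, Irreducible a) → (∀ b ∈ t, Irreducible b) →
    s.prod = x → t.prod = x → Multiset.card s = Multiset.card t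

/-- A *half-factorial domain*: an atomic domain in which every nonzero nonunit is an
HF-element. -/
def IsHFD (A : Type*) [CommRing A] : Prop :=
  IsAtomicDomain A ∧ ∀ x : A, x ≠ 0 → ¬ IsUnit x → IsHFElement x

/-- Every nonzero prime is the maximal ideal, so every nonunit lies in the radical of any nonzero
principal ideal. -/
theorem exists_dvd_pow_of_dim_one {A : Type*} [CommRing A] [IsDomain A] [IsLocalRing A]
    (hdim : ringKrullDim A = 1) {a b : A} (ha : a ≠ 0) (hb : ¬ IsUnit b) :
    ∃ j : ℕ, a ∣ b ^ j := by
  have hk : Ring.KrullDimLE 1 A := by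
    rw [Ring.krullDimLE_iff, hdim]; norm_num
  have hmem : b ∈ (Ideal.span {a}).radical := by
    rw [Ideal.radical_eq_sInf, Ideal.mem_sInf]
    rintro P ⟨hP, hPp⟩
    have haP : a ∈ P := hP (Ideal.mem_span_singleton_self a)
    have hmax : P.IsMaximal :=
      (Ring.krullDimLE_one_iff_of_noZeroDivisors.mp hk) P
        (fun h => ha (by simpa [h] using haP)) hPp
    rw [IsLocalRing.eq_maximalIdeal hmax]
    exact (IsLocalRing.mem_maximalIdeal b).mpr hb
  obtain ⟨j, hj⟩ := hmem
  exact ⟨j, Ideal.mem_span_singleton.mp hj⟩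

theorem prod_ne_zero_of_irreducible {A : Type*} [CommRing A] [IsDomain A] {S : Multiset A}
    (hS : ∀ a ∈ S, Irreducible a) : S.prod ≠ 0 :=
  Multiset.prod_ne_zero fun h => (hS 0 h).ne_zero rfl

/-- Goodness of `x` applies to equalities that hold only up to a unit: the unit is absorbed into an
atom on the side not required to contain `x`. -/
theorem card_eq_of_associated {A : Type*} [CommRing A] [IsDomain A] {x : A}
    (hx : ¬ IsBadAtom x) {S T : Multiset A} (hS : ∀ a ∈ S, Irreducible a)
    (hT : ∀ a ∈ T, Irreducible a) (h : Associated S.prod T.prod) (hxT : x ∈ T)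
    (hirr : IsIrredundant S T) : S.card = T.card := by
  classical
  by_contra hne
  have hS0 : S ≠ 0 := by
    rintro rfl
    have hu : IsUnit T.prod := by simpa using h.symm
    exact (hT x hxT).not_isUnit (isUnit_of_dvd_unit (Multiset.dvd_prod hxT) hu)
  obtain ⟨a, ha⟩ := Multiset.exists_mem_of_ne_zero hS0
  obtain ⟨S', rfl⟩ := Multiset.exists_cons_of_mem ha
  obtain ⟨c, hc⟩ := h
  refine hx ⟨hT x hxT, (a * c) ::ₘ S', T, ⟨by simp, ?_, ?_, hT, ?_⟩, ?_, by simpa using hne,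
    Or.inr hxT⟩
  · rintro rfl; simp at hxT
  · intro b hb
    rcases Multiset.mem_cons.mp hb with rfl | hb
    · exact (irreducible_mul_units c).mpr (hS a ha)
    · exact hS b (Multiset.mem_cons_of_mem hb)
  · rw [← hc, Multiset.prod_cons, Multiset.prod_cons]; ring
  · intro u v hu hv hu0 hv0 huS hvT huv
    by_cases hau : a * c ∈ u
    · obtain ⟨w, rfl⟩ := Multiset.exists_cons_of_mem hau
      have hw : w ≤ S' := (Multiset.cons_le_cons_iff _).mp hu
      refine hirr (a ::ₘ w) v ((Multiset.cons_le_cons_iff _).mpr hw) hv (by simp) hv0 ?_ hvT ?_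
      · intro h; exact huS (by rw [(Multiset.cons_inj_right a).mp h])
      · refine Associated.trans ⟨c, ?_⟩ huv
        rw [Multiset.prod_cons, Multiset.prod_cons]; ring
    · have hw : u ≤ S' := (Multiset.le_cons_of_notMem hau).mp hu
      refine hirr u v (hw.trans (Multiset.le_cons_self _ _)) hv hu0 hv0 ?_ hvT huv
      rintro rfl
      simpa using Multiset.card_le_card hw

/-- The irredundant component of an atomic equality that contains the good atom `x`. -/
theorem exists_balanced_part {A : Type*} [CommRing A] [IsDomain A] {x : A}
    (hx : ¬ IsBadAtom x) (n : ℕ) : ∀ S T : Multiset A, T.card ≤ n → (∀ a ∈ S, Irreducible a) →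
    (∀ a ∈ T, Irreducible a) → Associated S.prod T.prod → x ∈ T →
    ∃ S₁ S₂ T₁ T₂ : Multiset A, S = S₁ + S₂ ∧ T = T₁ + T₂ ∧ S₁.card = T₁.card ∧ x ∈ T₁ ∧
      Associated S₁.prod T₁.prod ∧ Associated S₂.prod T₂.prod := by
  induction n with
  | zero =>
    intro S T hn _ _ _ hxT
    have : T = 0 := Multiset.card_eq_zero.mp (by omega)
    simp [this] at hxT
  | succ n ih =>
    intro S T hn hS hT h hxT
    by_cases hirr : IsIrredundant S T
    · exact ⟨S, 0, T, 0, by simp, by simp, card_eq_of_associated hx hS hT h hxT hirr, hxT, h,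
        Associated.refl _⟩
    · unfold IsIrredundant at hirr
      push Not at hirr
      obtain ⟨u, v, hu, hv, hu0, hv0, huS, hvT, huv⟩ := hirr
      obtain ⟨u', rfl⟩ := Multiset.le_iff_exists_add.mp hu
      obtain ⟨v', rfl⟩ := Multiset.le_iff_exists_add.mp hv
      simp only [Multiset.mem_add, or_imp, forall_and] at hS hT
      rw [Multiset.prod_add, Multiset.prod_add] at h
      have huv' : Associated u'.prod v'.prod :=
        h.of_mul_left huv (prod_ne_zero_of_irreducible hS.1)
      have hc : 0 < v.card := Multiset.card_pos.mpr hv0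
      have hc' : 0 < v'.card := Multiset.card_pos.mpr (by rintro rfl; simp at hvT)
      rw [Multiset.card_add] at hn
      rcases Multiset.mem_add.mp hxT with hxv | hxv
      · obtain ⟨S₁, S₂, T₁, T₂, rfl, rfl, h1, h2, h3, h4⟩ :=
          ih u v (by omega) hS.1 hT.1 huv hxv
        refine ⟨S₁, S₂ + u', T₁, T₂ + v', by abel, by abel, h1, h2, h3, ?_⟩
        simpa using h4.mul_mul huv'
      · obtain ⟨S₁, S₂, T₁, T₂, rfl, rfl, h1, h2, h3, h4⟩ :=
          ih u' v' (by omega) hS.2 hT.2 huv' hxv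
        refine ⟨S₁, S₂ + u, T₁, T₂ + v, by abel, by abel, h1, h2, h3, ?_⟩
        simpa using h4.mul_mul huv

/-- An atomic equality splits into a balanced one containing all occurrences of the good atom `x`
on the right, and a remaining one. -/
theorem exists_balanced_split {A : Type*} [CommRing A] [IsDomain A] {x : A}
    (hx : ¬ IsBadAtom x) (n : ℕ) : ∀ S T : Multiset A, T.card ≤ n → (∀ a ∈ S, Irreducible a) →
    (∀ a ∈ T, Irreducible a) → Associated S.prod T.prod →
    ∃ S₁ S₂ T₁ T₂ : Multiset A, S = S₁ + S₂ ∧ T = T₁ + T₂ ∧ S₁.card = T₁.card ∧ x ∉ T₂ ∧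
      Associated S₁.prod T₁.prod ∧ Associated S₂.prod T₂.prod := by
  induction n with
  | zero =>
    intro S T hn _ _ h
    have : T = 0 := Multiset.card_eq_zero.mp (by omega)
    exact ⟨0, S, 0, T, by simp, by simp, by simp, by simp [this], Associated.refl _, h⟩
  | succ n ih =>
    intro S T hn hS hT h
    by_cases hxT : x ∈ T
    · obtain ⟨U, U', V, V', rfl, rfl, h1, h2, h3, h4⟩ :=
        exists_balanced_part hx _ S T le_rfl hS hT h hxT
      simp only [Multiset.mem_add, or_imp, forall_and] at hS hT
      have hc : 0 < V.card := Multiset.card_pos_iff_exists_mem.mpr ⟨x, h2⟩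
      rw [Multiset.card_add] at hn
      obtain ⟨S₁, S₂, T₁, T₂, rfl, rfl, g1, g2, g3, g4⟩ :=
        ih U' V' (by omega) hS.2 hT.2 h4
      refine ⟨U + S₁, S₂, V + T₁, T₂, by abel, by abel, by simp [h1, g1], g2, ?_, g4⟩
      simpa using h3.mul_mul g3
    · exact ⟨0, S, 0, T, by simp, by simp, by simp, hxT, Associated.refl _, h⟩

/-- A good atom forces all factorizations of an element to have the same length. Equal products
with `S.card < T.card` are impossible. -/
theorem not_card_lt_of_good {A : Type*} [CommRing A] [IsDomain A] [IsLocalRing A]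
    (hdim : ringKrullDim A = 1) (hA : IsAtomicDomain A) {x : A} (hxi : Irreducible x)
    (hx : ¬ IsBadAtom x) {S T : Multiset A} (hS : ∀ a ∈ S, Irreducible a)
    (hT : ∀ a ∈ T, Irreducible a) (h : S.prod = T.prod) : ¬ S.card < T.card := by
  classical
  intro hlt
  have hK : ∀ t : A, ∃ K : ℕ, t ∈ T → x ∣ t ^ K := by
    intro t
    by_cases ht : t ∈ T
    · obtain ⟨K, hK⟩ := exists_dvd_pow_of_dim_one hdim hxi.ne_zero (hT t ht).not_isUnit
      exact ⟨K, fun _ => hK⟩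
    · exact ⟨0, fun h => absurd h ht⟩
  choose K hK using hK
  set C := ∑ t ∈ T.toFinset, K t with hC
  -- Any `N > C` yields the contradiction.
  set N := C + 1 with hN
  have hSN : ∀ a ∈ N • S, Irreducible a := fun a ha => hS a (Multiset.mem_of_mem_nsmul ha)
  have hTN : ∀ a ∈ N • T, Irreducible a := fun a ha => hT a (Multiset.mem_of_mem_nsmul ha)
  have hy0 : (N • S).prod ≠ 0 := prod_ne_zero_of_irreducible hSN
  have hST : (N • S).prod = (N • T).prod := by
    rw [Multiset.prod_nsmul, Multiset.prod_nsmul, h]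
  have hfin : FiniteMultiplicity x (N • S).prod := by
    obtain ⟨j, hj⟩ := exists_dvd_pow_of_dim_one hdim hy0 hxi.not_isUnit
    refine ⟨j, fun hd => ?_⟩
    have := (pow_dvd_pow_iff hxi.ne_zero hxi.not_isUnit).mp (hd.trans hj)
    omega
  obtain ⟨w, hw, hwx⟩ := hfin.exists_eq_pow_mul_and_not_dvd
  set k := multiplicity x (N • S).prod with hk
  have hmax : ¬ x ^ (k + 1) ∣ (N • S).prod := hfin.not_pow_dvd_of_multiplicity_lt (by omega)
  obtain ⟨W, hWi, hW⟩ : ∃ W : Multiset A, (∀ a ∈ W, Irreducible a) ∧ Associated W.prod w := by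
    by_cases hwu : IsUnit w
    · exact ⟨0, by simp, by simpa using (associated_one_iff_isUnit.mpr hwu).symm⟩
    · obtain ⟨W, h1, h2⟩ := hA w (by rintro rfl; simp at hwx) hwu
      exact ⟨W, h1, h2 ▸ Associated.refl _⟩
  obtain ⟨F, hFi, hF, hFk⟩ : ∃ F : Multiset A, (∀ a ∈ F, Irreducible a) ∧
      Associated (N • S).prod F.prod ∧ k ≤ F.count x := by
    refine ⟨Multiset.replicate k x + W, ?_, ?_, by simp⟩
    · intro a ha
      rcases Multiset.mem_add.mp ha with ha | ha
      · rw [Multiset.eq_of_mem_replicate ha]; exact hxi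
      · exact hWi a ha
    · rw [hw, Multiset.prod_add, Multiset.prod_replicate]
      exact (Associated.refl _).mul_mul hW.symm
  obtain ⟨S₁, S₂, F₁, F₂, hS12, rfl, h1, h2, h3, h4⟩ :=
    exists_balanced_split hx _ (N • S) F le_rfl hSN hFi hF
  -- Replacing `F₂` by `S₂` makes the length equal to that of `N • S` and loses no factor `x`.
  have hGi : ∀ a ∈ F₁ + S₂, Irreducible a := by
    intro a ha
    rcases Multiset.mem_add.mp ha with ha | ha
    · exact hFi a (Multiset.mem_add.mpr (Or.inl ha))
    · exact hSN a (by rw [hS12]; exact Multiset.mem_add.mpr (Or.inr ha))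
  have hG : Associated (N • S).prod (F₁ + S₂).prod := by
    rw [hS12, Multiset.prod_add, Multiset.prod_add]
    exact h3.mul_mul (Associated.refl _)
  have hGk : k ≤ (F₁ + S₂).count x := by
    rw [Multiset.count_add, Multiset.count_eq_zero.mpr h2] at hFk
    rw [Multiset.count_add]; omega
  have hGcard : (F₁ + S₂).card = N * S.card := by
    rw [Multiset.card_add, ← h1, ← Multiset.card_add, ← hS12, Multiset.card_nsmul]
  generalize F₁ + S₂ = G at hGi hG hGk hGcard
  obtain ⟨T₁, T₂, G₁, G₂, hT12, rfl, g1, g2, g3, g4⟩ :=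
    exists_balanced_split hx _ (N • T) G le_rfl hTN hGi (hST ▸ hG)
  have hxT₂ : ¬ x ∣ T₂.prod := by
    intro hd
    apply hmax
    rw [Multiset.count_add, Multiset.count_eq_zero.mpr g2, add_zero] at hGk
    have hd1 : x ^ k ∣ G₁.prod := by
      rw [← Multiset.prod_replicate]
      exact Multiset.prod_dvd_prod_of_le (Multiset.le_count_iff_replicate_le.mp hGk)
    have hd2 : x ∣ G₂.prod := hd.trans g4.dvd
    rw [pow_succ]
    refine Dvd.dvd.trans ?_ hG.symm.dvd
    rw [Multiset.prod_add]
    exact mul_dvd_mul hd1 hd2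
  have hT₂T : ∀ t ∈ T₂, t ∈ T := fun t ht =>
    Multiset.mem_of_mem_nsmul (n := N) (by rw [hT12]; exact Multiset.mem_add.mpr (Or.inr ht))
  have hcard : T₂.card ≤ C := by
    rw [← Multiset.sum_count_eq_card (s := T.toFinset) (m := T₂)
      (fun t ht => Multiset.mem_toFinset.mpr (hT₂T t ht)), hC]
    refine Finset.sum_le_sum fun t ht => ?_
    by_contra! hlt
    refine hxT₂ ((hK t (Multiset.mem_toFinset.mp ht)).trans ?_)
    rw [← Multiset.prod_replicate]
    exact Multiset.prod_dvd_prod_of_le (Multiset.le_count_iff_replicate_le.mp hlt.le)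
  have hTcard : N * T.card = T₁.card + T₂.card := by
    rw [← Multiset.card_add, ← hT12, Multiset.card_nsmul]
  rw [Multiset.card_add] at hGcard
  nlinarith

/-- **Corollary.** In a quasilocal one-dimensional atomic domain, all atoms are good
or all atoms are bad. -/
theorem stmt_7 {A : Type*} [CommRing A] [IsDomain A] [IsLocalRing A]
    (hdim : ringKrullDim A = 1) (hA : IsAtomicDomain A) :
    (∀ x : A, Irreducible x → IsGoodAtom x) ∨ (∀ x : A, Irreducible x → IsBadAtom x) := by
  by_cases hbad : ∀ x : A, Irreducible x → IsBadAtom x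
  · exact Or.inr hbad
  · push Not at hbad
    obtain ⟨x, hxi, hx⟩ := hbad
    refine Or.inl fun z hz => ⟨hz, ?_⟩
    rintro ⟨-, s, t, ⟨-, -, hs, ht, hst⟩, -, hne, -⟩
    rcases lt_or_gt_of_ne hne with hlt | hlt
    · exact not_card_lt_of_good hdim hA hxi hx hs ht hst hlt
    · exact not_card_lt_of_good hdim hA hxi hx ht hs hst.symm hlt
end

section
/- Let A be an atomic domain and S ⊆ A a saturated multiplicative set such that every nonunit element of S is a finite product of good atoms of A. If the localization A_S of A at S is a half-factorial domain, then A is a half-factorial domain. -/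
/-! ### Splitting relations between atoms -/

lemma prod_ne_zero_of_irreducible_s10 {B : Type*} [CommRing B] [IsDomain B] {s : Multiset B}
    (hs : ∀ a ∈ s, Irreducible a) : s.prod ≠ 0 := by
  intro h
  exact (hs 0 (Multiset.prod_eq_zero_iff.1 h)).ne_zero rfl

lemma eq_zero_of_isUnit_prod {B : Type*} [CommRing B] {s : Multiset B}
    (hs : ∀ a ∈ s, Irreducible a) (h : IsUnit s.prod) : s = 0 := by
  by_contra h0
  obtain ⟨a, ha⟩ := Multiset.exists_mem_of_ne_zero h0
  exact (hs a ha).not_isUnit (isUnit_of_dvd_unit (Multiset.dvd_prod ha) h)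

lemma exists_eq_singleton_of_irreducible_prod {B : Type*} [CommRing B] {s : Multiset B}
    (hs : ∀ a ∈ s, Irreducible a) (h : Irreducible s.prod) : ∃ a, s = {a} := by
  induction s using Multiset.induction_on with
  | empty => exact absurd h (by simp)
  | cons a s _ =>
    rw [Multiset.prod_cons] at h
    have hu := (h.isUnit_or_isUnit rfl).resolve_left (hs a (by simp)).not_isUnit
    have h0 := eq_zero_of_isUnit_prod (fun b hb => hs b (Multiset.mem_cons_of_mem hb)) hu
    exact ⟨a, by simp [h0]⟩

lemma IsIrredundant.symm {B : Type*} [CommRing B] {s t : Multiset B} (h : IsIrredundant s t) :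
    IsIrredundant t s :=
  fun u v hu hv hu0 hv0 hut hvs huv => h v u hv hu hv0 hu0 hvs hut huv.symm

/-- The definition of a bad atom uses equalities of products; irredundant relations up to
a unit reduce to them by absorbing the unit into one of the atoms. -/
lemma card_eq_of_good_mem_left {B : Type*} [CommRing B] [IsDomain B] {s t : Multiset B}
    (hs : ∀ a ∈ s, Irreducible a) (ht : ∀ a ∈ t, Irreducible a)
    (hst : Associated s.prod t.prod) (hirr : IsIrredundant s t)
    {p : B} (hp : IsGoodAtom p) (hps : p ∈ s) : s.card = t.card := by
  by_contra hcard
  have hs0 : s ≠ 0 := by rintro rfl; simp at hps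
  have ht0 : t ≠ 0 := by
    rintro rfl
    exact hs0 (eq_zero_of_isUnit_prod hs (hst.symm.isUnit (by simp)))
  obtain ⟨b, hb⟩ := Multiset.exists_mem_of_ne_zero ht0
  obtain ⟨t, rfl⟩ := Multiset.exists_cons_of_mem hb
  obtain ⟨w, hw⟩ := hst.symm
  refine hp.2 ⟨hp.1, s, (b * w) ::ₘ t, ⟨hs0, by simp, hs, ?_, ?_⟩, ?_, by simpa using hcard,
    Or.inl hps⟩
  · intro c hc
    rcases Multiset.mem_cons.1 hc with rfl | hc
    · exact (irreducible_mul_units w).2 (ht b (by simp))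
    · exact ht c (Multiset.mem_cons_of_mem hc)
  · rw [← hw, Multiset.prod_cons, Multiset.prod_cons]; ring
  · intro u v hu hv hu0 hv0 hus hvt huv
    by_cases hm : b * w ∈ v
    · obtain ⟨v, rfl⟩ := Multiset.exists_cons_of_mem hm
      refine hirr u (b ::ₘ v) hu ?_ hu0 (by simp) hus ?_ (huv.trans ?_)
      · exact (Multiset.cons_le_cons_iff b).2 ((Multiset.cons_le_cons_iff _).1 hv)
      · intro h
        exact hvt (by rw [(Multiset.cons_inj_right b).1 h])
      · refine ⟨w⁻¹, ?_⟩
        rw [Multiset.prod_cons, Multiset.prod_cons, mul_right_comm, Units.mul_inv_cancel_right]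
    · have hv' : v ≤ t := (Multiset.le_cons_of_notMem hm).1 hv
      refine hirr u v hu (hv'.trans (Multiset.le_cons_self t b)) hu0 hv0 hus ?_ huv
      rintro rfl
      have := Multiset.card_le_card hv'
      simp at this

/-- A relation is balanced as soon as its irredundant sub-relations are. -/
lemma card_eq_of_pieces {B : Type*} [CommRing B] [IsDomain B] (s t : Multiset B)
    (hs : ∀ a ∈ s, Irreducible a) (ht : ∀ a ∈ t, Irreducible a)
    (hst : Associated s.prod t.prod)
    (H : ∀ u v : Multiset B, u ≤ s → v ≤ t → Associated u.prod v.prod → IsIrredundant u v →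
      u.card = v.card) : s.card = t.card := by
  induction hn : s.card using Nat.strong_induction_on generalizing s t with
  | _ n ih =>
    subst hn
    by_cases hirr : IsIrredundant s t
    · exact H s t le_rfl le_rfl hst hirr
    · unfold IsIrredundant at hirr
      push Not at hirr
      obtain ⟨u, v, hu, hv, hu0, hv0, hus, hvt, huv⟩ := hirr
      obtain ⟨u', rfl⟩ := Multiset.le_iff_exists_add.1 hu
      obtain ⟨v', rfl⟩ := Multiset.le_iff_exists_add.1 hv
      have hu1 : ∀ a ∈ u, Irreducible a := fun a ha => hs a (Multiset.mem_add.2 (Or.inl ha))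
      have hu2 : ∀ a ∈ u', Irreducible a := fun a ha => hs a (Multiset.mem_add.2 (Or.inr ha))
      have hv1 : ∀ a ∈ v, Irreducible a := fun a ha => ht a (Multiset.mem_add.2 (Or.inl ha))
      have hv2 : ∀ a ∈ v', Irreducible a := fun a ha => ht a (Multiset.mem_add.2 (Or.inr ha))
      have huv' : Associated u'.prod v'.prod := by
        rw [Multiset.prod_add, Multiset.prod_add] at hst
        exact hst.of_mul_left huv (prod_ne_zero_of_irreducible_s10 hu1)
      have hu0' : u' ≠ 0 := by rintro rfl; simp at hus
      have c1 := Multiset.card_pos.2 hu0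
      have c2 := Multiset.card_pos.2 hu0'
      have e1 := ih u.card (by rw [Multiset.card_add]; omega) u v hu1 hv1 huv
        (fun a b ha hb => H a b (ha.trans hu) (hb.trans hv)) rfl
      have e2 := ih u'.card (by rw [Multiset.card_add]; omega) u' v' hu2 hv2 huv'
        (fun a b ha hb => H a b (ha.trans (Multiset.le_add_left _ _))
          (hb.trans (Multiset.le_add_left _ _))) rfl
      rw [Multiset.card_add, Multiset.card_add, e1, e2]

lemma IsHFD.card_eq {B : Type*} [CommRing B] [IsDomain B] (hB : IsHFD B) {s t : Multiset B}
    (hs : ∀ a ∈ s, Irreducible a) (ht : ∀ a ∈ t, Irreducible a)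
    (hst : Associated s.prod t.prod) : s.card = t.card := by
  by_cases ht0 : t = 0
  · subst ht0
    rw [eq_zero_of_isUnit_prod hs (hst.symm.isUnit (by simp))]
  · obtain ⟨b, hb⟩ := Multiset.exists_mem_of_ne_zero ht0
    obtain ⟨t, rfl⟩ := Multiset.exists_cons_of_mem hb
    obtain ⟨w, hw⟩ := hst.symm
    have := hB.2 s.prod (prod_ne_zero_of_irreducible_s10 hs)
      (fun h => ht0 (eq_zero_of_isUnit_prod ht (hst.isUnit h))) s ((b * w) ::ₘ t) hs ?_ rfl ?_
    · simpa using this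
    · intro c hc
      rcases Multiset.mem_cons.1 hc with rfl | hc
      · exact (irreducible_mul_units w).2 (ht b (by simp))
      · exact ht c (Multiset.mem_cons_of_mem hc)
    · rw [← hw, Multiset.prod_cons, Multiset.prod_cons]; ring

/-! ### Relations between nice atoms -/

/-- An atom that is good or stays irreducible in the localization at `S`. -/
def IsNiceAtom {A : Type*} [CommRing A] (S : Submonoid A) (z : A) : Prop :=
  Irreducible z ∧ (IsGoodAtom z ∨ Irreducible (algebraMap A (Localization S) z))

lemma card_eq_of_nice {A : Type*} [CommRing A] [IsDomain A] {S : Submonoid A}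
    [IsDomain (Localization S)] (hloc : IsHFD (Localization S)) {s t : Multiset A}
    (hs : ∀ a ∈ s, IsNiceAtom S a) (ht : ∀ a ∈ t, IsNiceAtom S a)
    (hst : Associated s.prod t.prod) : s.card = t.card := by
  refine card_eq_of_pieces s t (fun a ha => (hs a ha).1) (fun a ha => (ht a ha).1) hst ?_
  intro u v hu hv huv hirr
  replace hs := fun a ha => hs a (Multiset.mem_of_le hu ha)
  replace ht := fun a ha => ht a (Multiset.mem_of_le hv ha)
  by_cases h1 : ∃ p ∈ u, IsGoodAtom p
  · obtain ⟨p, hp, hg⟩ := h1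
    exact card_eq_of_good_mem_left (fun a ha => (hs a ha).1) (fun a ha => (ht a ha).1) huv hirr
      hg hp
  by_cases h2 : ∃ p ∈ v, IsGoodAtom p
  · obtain ⟨p, hp, hg⟩ := h2
    exact (card_eq_of_good_mem_left (fun a ha => (ht a ha).1) (fun a ha => (hs a ha).1) huv.symm
      hirr.symm hg hp).symm
  push Not at h1 h2
  have := hloc.card_eq (s := u.map (algebraMap A (Localization S)))
    (t := v.map (algebraMap A (Localization S))) ?_ ?_ ?_
  · simpa using this
  · intro a ha
    obtain ⟨b, hb, rfl⟩ := Multiset.mem_map.1 ha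
    exact (hs b hb).2.resolve_left (h1 b hb)
  · intro a ha
    obtain ⟨b, hb, rfl⟩ := Multiset.mem_map.1 ha
    exact (ht b hb).2.resolve_left (h2 b hb)
  · rw [← map_multiset_prod, ← map_multiset_prod]
    exact huv.map _

/-! ### Nice lengths -/

/-- After multiplication by `r` good atoms, `x` becomes, up to a unit, a product of `r + k` nice
atoms. The number `k` plays the role of the length of `x`. -/
def HasNiceLength {A : Type*} [CommRing A] (S : Submonoid A) (x : A) (k : ℕ) : Prop :=
  ∃ p z : Multiset A, (∀ a ∈ p, IsGoodAtom a) ∧ (∀ a ∈ z, IsNiceAtom S a) ∧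
    Associated (p.prod * x) z.prod ∧ z.card = p.card + k

lemma HasNiceLength.mul {A : Type*} [CommRing A] {S : Submonoid A} {x y : A} {k l : ℕ}
    (hx : HasNiceLength S x k) (hy : HasNiceLength S y l) : HasNiceLength S (x * y) (k + l) := by
  obtain ⟨p, z, hp, hz, h, hc⟩ := hx
  obtain ⟨q, w, hq, hw, hyw, hcw⟩ := hy
  refine ⟨p + q, z + w, ?_, ?_, ?_, ?_⟩
  · intro a ha
    exact (Multiset.mem_add.1 ha).elim (hp a) (hq a)
  · intro a ha
    exact (Multiset.mem_add.1 ha).elim (hz a) (hw a)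
  · rw [Multiset.prod_add, Multiset.prod_add, mul_mul_mul_comm]
    exact h.mul_mul hyw
  · rw [Multiset.card_add, Multiset.card_add]; omega

lemma HasNiceLength.unique {A : Type*} [CommRing A] [IsDomain A] {S : Submonoid A}
    [IsDomain (Localization S)] (hloc : IsHFD (Localization S)) {x : A} {k l : ℕ}
    (hx : HasNiceLength S x k) (hy : HasNiceLength S x l) : k = l := by
  obtain ⟨p, z, hp, hz, h, hc⟩ := hx
  obtain ⟨q, w, hq, hw, hyw, hcw⟩ := hy
  -- Both sides are associated to `p.prod * q.prod * x`.
  have key : (q + z).card = (p + w).card := by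
    refine card_eq_of_nice hloc (S := S) ?_ ?_ ?_
    · intro a ha
      exact (Multiset.mem_add.1 ha).elim (fun ha => ⟨(hq a ha).1, Or.inl (hq a ha)⟩) (hz a)
    · intro a ha
      exact (Multiset.mem_add.1 ha).elim (fun ha => ⟨(hp a ha).1, Or.inl (hp a ha)⟩) (hw a)
    · rw [Multiset.prod_add, Multiset.prod_add]
      refine (h.symm.mul_left q.prod).trans ?_
      rw [mul_left_comm]
      exact hyw.mul_left p.prod
  rw [Multiset.card_add, Multiset.card_add] at key
  omega

/-! ### Atoms have nice length one -/

/-- Clearing denominators: a product of atoms of `A_S` is, up to a factor from `S`, the image of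
a product of nice atoms of `A`. -/
lemma exists_nice_prod {A : Type*} [CommRing A] [IsDomain A] (hA : IsAtomicDomain A)
    {S : Submonoid A} (hsat : ∀ a b : A, a * b ∈ S → a ∈ S ∧ b ∈ S)
    (hgood : ∀ s ∈ S, ¬ IsUnit s → ∃ m : Multiset A, (∀ a ∈ m, IsGoodAtom a) ∧ m.prod = s)
    (X : Multiset (Localization S)) (hX : ∀ ξ ∈ X, Irreducible ξ) :
    ∃ s ∈ S, ∃ z : Multiset A, (∀ a ∈ z, IsNiceAtom S a) ∧
      algebraMap A (Localization S) s * X.prod = algebraMap A (Localization S) z.prod := by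
  induction X using Multiset.induction_on with
  | empty => exact ⟨1, S.one_mem, 0, by simp, by simp⟩
  | cons ξ X ih =>
    obtain ⟨s, hs, z, hz, hsz⟩ := ih fun η hη => hX η (Multiset.mem_cons_of_mem hη)
    have hξ := hX ξ (by simp)
    obtain ⟨⟨x, t⟩, hxt⟩ := IsLocalization.surj S ξ
    simp only at hxt
    have hx : Irreducible (algebraMap A (Localization S) x) := by
      rw [← hxt]
      exact (irreducible_mul_isUnit (IsLocalization.map_units _ t)).2 hξ
    obtain ⟨w, hw, hwx⟩ := hA x (by rintro rfl; exact hx.ne_zero (map_zero _))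
      (fun h => hx.not_isUnit (h.map _))
    refine ⟨s * t, S.mul_mem hs t.2, w + z, ?_, ?_⟩
    · intro a ha
      rcases Multiset.mem_add.1 ha with ha | ha
      · refine ⟨hw a ha, ?_⟩
        obtain ⟨c, hc⟩ := Multiset.dvd_prod ha
        rw [hwx] at hc
        by_cases hu : IsUnit (algebraMap A (Localization S) a)
        -- By saturation `a` lies in `S`, so it is a product of good atoms, with only one factor.
        · obtain ⟨d, hd⟩ := (IsLocalization.algebraMap_isUnit_iff S).1 hu
          obtain ⟨c, rfl⟩ := hd.2
          obtain ⟨m, hm, hma⟩ := hgood a (hsat _ _ hd.1).1 (hw a ha).not_isUnit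
          obtain ⟨b, rfl⟩ := exists_eq_singleton_of_irreducible_prod (fun b hb => (hm b hb).1)
            (hma ▸ hw a ha)
          rw [Multiset.prod_singleton] at hma
          exact Or.inl (hma ▸ hm b (by simp))
        · rw [hc, map_mul] at hx
          have hcu := (hx.isUnit_or_isUnit rfl).resolve_left hu
          exact Or.inr ((irreducible_mul_isUnit hcu).1 hx)
      · exact hz a ha
    · rw [Multiset.prod_add, hwx, map_mul, map_mul, ← hsz, ← hxt, Multiset.prod_cons]
      ring

/-- An atom times good atoms can only be associated to a product of nice atoms in a balanced way,
so every atom has nice length one, whatever its length in `A_S`. -/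
lemma hasNiceLength_one {A : Type*} [CommRing A] [IsDomain A] (hA : IsAtomicDomain A)
    {S : Submonoid A} (hS : S ≤ nonZeroDivisors A)
    (hsat : ∀ a b : A, a * b ∈ S → a ∈ S ∧ b ∈ S)
    (hgood : ∀ s ∈ S, ¬ IsUnit s → ∃ m : Multiset A, (∀ a ∈ m, IsGoodAtom a) ∧ m.prod = s)
    (hloc : IsHFD (Localization S)) {a : A} (ha : Irreducible a) : HasNiceLength S a 1 := by
  have hinj := IsLocalization.injective (Localization S) hS
  obtain ⟨p, z, hp, hz, hpz⟩ : ∃ p z : Multiset A, (∀ b ∈ p, IsGoodAtom b) ∧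
      (∀ b ∈ z, IsNiceAtom S b) ∧ Associated (p.prod * a) z.prod := by
    by_cases hu : IsUnit (algebraMap A (Localization S) a)
    · obtain ⟨d, hd⟩ := (IsLocalization.algebraMap_isUnit_iff S).1 hu
      obtain ⟨c, rfl⟩ := hd.2
      obtain ⟨m, hm, hma⟩ := hgood a (hsat _ _ hd.1).1 ha.not_isUnit
      exact ⟨0, m, by simp, fun b hb => ⟨(hm b hb).1, Or.inl (hm b hb)⟩, by simp [hma]⟩
    · obtain ⟨X, hX, hXa⟩ := hloc.1 (algebraMap A (Localization S) a)
        (fun h => ha.ne_zero (hinj (h.trans (map_zero _).symm))) hu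
      obtain ⟨s, hs, z, hz, hsz⟩ := exists_nice_prod hA hsat hgood X hX
      rw [hXa, ← map_mul] at hsz
      replace hsz := hinj hsz
      by_cases hsu : IsUnit s
      · refine ⟨0, z, by simp, hz, ?_⟩
        rw [← hsz, Multiset.prod_zero]
        exact ((associated_one_iff_isUnit.2 hsu).symm).mul_right a
      · obtain ⟨m, hm, hms⟩ := hgood s hs hsu
        exact ⟨m, z, hm, hz, by rw [hms, hsz]⟩
  refine ⟨p, z, hp, hz, hpz, ?_⟩
  have key : (a ::ₘ p).card = z.card := by
    refine card_eq_of_pieces _ _ ?_ (fun b hb => (hz b hb).1) ?_ ?_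
    · intro b hb
      rcases Multiset.mem_cons.1 hb with rfl | hb
      · exact ha
      · exact (hp b hb).1
    · rwa [Multiset.prod_cons, mul_comm]
    · intro u v hu hv huv hirr
      have hv1 : ∀ b ∈ v, Irreducible b := fun b hb => (hz b (Multiset.mem_of_le hv hb)).1
      have hu1 : ∀ b ∈ u, Irreducible b := fun b hb => by
        rcases Multiset.mem_cons.1 (Multiset.mem_of_le hu hb) with rfl | hb
        · exact ha
        · exact (hp b hb).1
      by_cases h1 : ∃ q ∈ u, IsGoodAtom q
      · obtain ⟨q, hq, hg⟩ := h1
        exact card_eq_of_good_mem_left hu1 hv1 huv hirr hg hq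
      push Not at h1
      -- Without good atoms, `u` is empty or consists of `a` alone.
      by_cases hau : a ∈ u
      · obtain ⟨u, rfl⟩ := Multiset.exists_cons_of_mem hau
        have hup : u ≤ p := (Multiset.cons_le_cons_iff a).1 hu
        have hu0 : u = 0 := Multiset.eq_zero_of_forall_notMem fun b hb =>
          h1 b (Multiset.mem_cons_of_mem hb) (hp b (Multiset.mem_of_le hup hb))
        subst hu0
        rw [Multiset.prod_cons, Multiset.prod_zero, mul_one] at huv
        obtain ⟨b, rfl⟩ := exists_eq_singleton_of_irreducible_prod hv1 (huv.irreducible ha)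
        simp
      · have hup : u ≤ p := (Multiset.le_cons_of_notMem hau).1 hu
        have hu0 : u = 0 := Multiset.eq_zero_of_forall_notMem fun b hb =>
          h1 b hb (hp b (Multiset.mem_of_le hup hb))
        subst hu0
        rw [eq_zero_of_isUnit_prod hv1 (huv.isUnit (by simp))]
  rw [← key, Multiset.card_cons]

/-- **Theorem 7 (Nagata-type theorem for HFDs).** Let `A` be an atomic domain and
`S ⊆ A` a saturated multiplicative set every nonunit element of which is a finite
product of good atoms. If the localization `A_S` is a half-factorial domain, then so
is `A`. -/
theorem stmt_10 {A : Type*} [CommRing A] [IsDomain A] (hA : IsAtomicDomain A)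
    (S : Submonoid A)
    (hsat : ∀ a b : A, a * b ∈ S → a ∈ S ∧ b ∈ S)
    (hgood : ∀ s ∈ S, ¬ IsUnit s →
      ∃ m : Multiset A, (∀ a ∈ m, IsGoodAtom a) ∧ m.prod = s)
    (hloc : IsHFD (Localization S)) :
    IsHFD A := by
  -- The zero element is not a product of atoms, so it is not in `S`.
  have hS : S ≤ nonZeroDivisors A := by
    refine le_nonZeroDivisors_of_noZeroDivisors fun h0 => ?_
    obtain ⟨m, hm, hm0⟩ := hgood 0 h0 not_isUnit_zero
    exact prod_ne_zero_of_irreducible_s10 (fun a ha => (hm a ha).1) hm0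
  have : IsDomain (Localization S) := IsLocalization.isDomain_localization hS
  have hlen : ∀ s : Multiset A, (∀ a ∈ s, Irreducible a) → HasNiceLength S s.prod s.card := by
    intro s
    induction s using Multiset.induction_on with
    | empty => exact fun _ => ⟨0, 0, by simp, by simp, by simp, by simp⟩
    | cons a s ih =>
      intro hs
      rw [Multiset.prod_cons, Multiset.card_cons, add_comm]
      exact (hasNiceLength_one hA hS hsat hgood hloc (hs a (by simp))).mul
        (ih fun b hb => hs b (Multiset.mem_cons_of_mem hb))
  refine ⟨hA, fun x _ _ s t hs ht hsx htx => ?_⟩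
  have h1 := hlen s hs
  have h2 := hlen t ht
  rw [hsx] at h1
  rw [htx] at h2
  exact h1.unique hloc h2
end
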